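/- Let $(W,S)$ be a Coxeter system with $S$ finite and $G$ a group of automorphisms of $W$ stabilizing $S$. For a $G$-orbit $\omega \subseteq S$ with $W_\omega = \langle \omega \rangle$ finite, let $s_\omega$ be the longest element of $W_\omega$, and let $S_G$ be the set of all such $s_\omega$. Then the fixed-point subgroup $W^G$ is generated by $S_G$, and $(W^G, S_G)$ is a Coxeter system. -/

import Mathlib

noncomputable section

section Cox
variable (B W : Type) [Group W] (M : CoxeterMatrix B) (cs : CoxeterSystem M W)
  (G : Type) [Group G] [MulDistribMulAction G W]

/-- The subgroup `W^G` of `G`-fixed points of `W`. -/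
def fixedSubgroup : Subgroup W where
  carrier := {w | ∀ σ : G, σ • w = w}
  mul_mem' := by intro a b ha hb; intro σ; rw [smul_mul', ha, hb]
  one_mem' := by intro σ; exact smul_one σ
  inv_mem' := by intro a ha; intro σ; rw [smul_inv', ha]

/-- The standard parabolic subgroup `W_ω` generated by the simple reflections in the
`G`-orbit `ω` of `i`. -/
def parab [MulAction G B] (i : B) : Subgroup W :=
  Subgroup.closure (cs.simple '' MulAction.orbit G i)

/-- The set `S_G` of longest elements `s_ω` of the finite standard parabolic subgroups `W_ω`,
`ω` running over the `G`-orbits in `S`. -/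
def SGset [MulAction G B] : Set W :=
  {w | ∃ i : B, w ∈ parab B W M cs G i ∧ ((parab B W M cs G i : Set W)).Finite ∧
    ∀ u ∈ parab B W M cs G i, cs.length u ≤ cs.length w}
end Cox

/-!
Deleting a letter (the exchange condition) shows that, for `J ⊆ S`, right multiplication by an
element `y` of `W_J` adds `ℓ(y)` to the length of any `w` without right descents in `J` and
subtracts `ℓ(y)` when every element of `J` is a right descent of `w`. The right descents of
`w ∈ W^G` form a union of `G`-orbits. If an orbit `ω` consists of descents of `w`, then `W_ω` is
finite and `w * s_ω` is a shorter fixed point, whence generation by induction on the length.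

For two elements of `S_G`, the same dichotomy applied to the union of the two orbits says that `ℓ`,
restricted to `W^G`, behaves like a weighted Coxeter length on the cosets of the rank-two subgroups.
This alone forces a Coxeter system: in the Coxeter group on `S_G` whose matrix is given by the
orders of the products, write an element without right descent `t` as `v * a`, with `a` an
alternating product of `t` and some `r`, and `v` without right descents `t`, `r`; this shows
inductively that ascents map to ascents in `W^G`, so the canonical map to `W^G` has trivial kernel.
-/

namespace CoxeterFixedPoints

open CoxeterSystem List

section AlternatingProducts

variable {ι N : Type*} [Monoid N] (s : ι → N)

/-- The alternating product `⋯ s t * s r * s t * s r` with `k` factors, the last one being `s r`. -/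
def altProd (t r : ι) (k : ℕ) : N := ((alternatingWord t r k).map s).prod

@[simp]
theorem altProd_zero (t r : ι) : altProd s t r 0 = 1 := rfl

theorem altProd_succ (t r : ι) (k : ℕ) : altProd s t r (k + 1) = altProd s r t k * s r := by
  simp [altProd, alternatingWord_succ]

theorem altProd_two_mul (t r : ι) (k : ℕ) : altProd s t r (2 * k) = (s t * s r) ^ k := by
  induction k with
  | zero => simp
  | succ k ih => rw [mul_add_one, altProd_succ, altProd_succ, ih, pow_succ, mul_assoc]

end AlternatingProducts

section Exchange

variable {B W : Type*} [Group W] {M : CoxeterMatrix B} (cs : CoxeterSystem M W)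

/-- Conjugation by the simple reflection `i` on `W × ZMod 2`, flipping the sign exactly at
`cs.simple i`. Composing these maps along a word records in the second component the parity of the
number of occurrences of an element in the inversion sequence of the word. The sign is put on all
of `W` rather than only on the reflections. -/
def signedConj [DecidableEq W] (i : B) : Function.End (W × ZMod 2) := fun p =>
  (cs.simple i * p.1 * cs.simple i, p.2 + if p.1 = cs.simple i then 1 else 0)

theorem prod_map_signedConj [DecidableEq W] (ω : List B) (t : W) (e : ZMod 2) :
    (ω.map (signedConj cs)).prod (t, e) = (cs.wordProd ω * t * (cs.wordProd ω)⁻¹,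
      e + ((cs.leftInvSeq ω).count (cs.wordProd ω * t * (cs.wordProd ω)⁻¹) : ZMod 2)) := by
  induction ω with
  | nil => simp [Function.End.one_def]
  | cons i ω ih =>
    set u := cs.wordProd ω * t * (cs.wordProd ω)⁻¹ with hu
    have hconj : cs.wordProd (i :: ω) * t * (cs.wordProd (i :: ω))⁻¹ =
        MulAut.conj (cs.simple i) u := by
      simp [hu, wordProd_cons, mul_assoc]
    have hfix : cs.simple i = cs.simple i * u * cs.simple i ↔ u = cs.simple i := by
      rw [mul_assoc, left_eq_mul, ← eq_inv_iff_mul_eq_one, inv_simple]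
    rw [List.map_cons, List.prod_cons]
    change signedConj cs i ((ω.map (signedConj cs)).prod (t, e)) = _
    rw [ih, signedConj, hconj, leftInvSeq, List.count_cons,
      List.count_map_of_injective _ _ (MulAut.conj (cs.simple i)).injective]
    simp only [beq_iff_eq, hfix, Nat.cast_add, Nat.cast_ite, Nat.cast_one, Nat.cast_zero,
      add_assoc, MulAut.conj_apply, inv_simple]

theorem even_count_leftInvSeq_alternatingWord [DecidableEq W] (i j : B) (t : W) :
    Even ((cs.leftInvSeq (alternatingWord i j (2 * M i j))).count t) := by
  set l := cs.leftInvSeq (alternatingWord i j (2 * M i j)) with hl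
  have hlen : l.length = 2 * M i j := by simp [hl]
  have hperiodic : l.drop (M i j) = l.take (M i j) := by
    refine List.ext_getElem (by simp only [length_drop, length_take]; omega) fun n h₁ h₂ => ?_
    simp only [length_drop, length_take] at h₁ h₂
    have half_odd (m : ℕ) : (2 * m + 1) / 2 = m := by omega
    have not_even (m : ℕ) : ¬ Even (2 * m + 1) := by simp
    simp only [List.getElem_drop, List.getElem_take, hl]
    rw [getElem_leftInvSeq_alternatingWord _ _ _ _ _ (by omega),
      getElem_leftInvSeq_alternatingWord _ _ _ _ _ (by omega), prod_alternatingWord_eq_mul_pow,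
      prod_alternatingWord_eq_mul_pow, half_odd, half_odd, pow_add, simple_mul_simple_pow', one_mul,
      if_neg (not_even _), if_neg (not_even _)]
  rw [← List.take_append_drop (M i j) l, List.count_append, hperiodic]
  exact ⟨_, rfl⟩

theorem isLiftable_signedConj [DecidableEq W] : M.IsLiftable (signedConj cs) := by
  intro i j
  have hword : cs.wordProd (alternatingWord i j (2 * M i j)) = 1 := by
    simp [prod_alternatingWord_eq_mul_pow]
  rw [← altProd_two_mul, altProd]
  funext ⟨t, e⟩
  change _ = (t, e)
  have heven := (even_count_leftInvSeq_alternatingWord cs i j t).natCast_zmod_two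
  simp [prod_map_signedConj, hword, heven]

theorem count_leftInvSeq_congr [DecidableEq W] {ω ω' : List B}
    (h : cs.wordProd ω = cs.wordProd ω') (t : W) :
    ((cs.leftInvSeq ω).count t : ZMod 2) = (cs.leftInvSeq ω').count t := by
  have hlift (ω : List B) :
      (ω.map (signedConj cs)).prod = cs.lift ⟨_, isLiftable_signedConj cs⟩ (cs.wordProd ω) := by
    rw [wordProd, map_list_prod, List.map_map]
    congr 2
    funext i
    exact (cs.lift_apply_simple (isLiftable_signedConj cs) i).symm
  have heq := congrFun ((hlift ω).trans ((congrArg _ h).trans (hlift ω').symm))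
    ((cs.wordProd ω)⁻¹ * t * cs.wordProd ω, 0)
  rw [prod_map_signedConj, prod_map_signedConj, ← h] at heq
  simpa [mul_assoc] using congrArg Prod.snd heq

theorem mem_leftInvSeq_of_isLeftDescent {ω : List B} {i : B}
    (h : cs.IsLeftDescent (cs.wordProd ω) i) : cs.simple i ∈ cs.leftInvSeq ω := by
  classical
  obtain ⟨ω', hred, hω'⟩ := cs.exists_isReduced (cs.simple i * cs.wordProd ω)
  have hword : cs.wordProd ω = cs.wordProd (i :: ω') := by simp [wordProd_cons, ← hω']
  have hnot_mem : cs.simple i ∉ cs.leftInvSeq ω' := fun hmem => by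
    have hlt := (cs.isLeftInversion_of_mem_leftInvSeq hred hmem).2
    rw [← hω', simple_mul_simple_cancel_left] at hlt
    exact hlt.asymm h
  have hcount : (cs.leftInvSeq (i :: ω')).count (cs.simple i) = 1 := by
    have hmap := List.count_map_of_injective (cs.leftInvSeq ω') _
      (MulAut.conj (cs.simple i)).injective (cs.simple i)
    rw [List.count_eq_zero.2 hnot_mem] at hmap
    simpa [leftInvSeq] using hmap
  by_contra hmem
  have hparity := count_leftInvSeq_congr cs hword (cs.simple i)
  rw [hcount, List.count_eq_zero.2 hmem] at hparity
  simp at hparity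

theorem exists_mul_simple_eq_wordProd_eraseIdx {ω : List B} {i : B}
    (h : cs.IsRightDescent (cs.wordProd ω) i) :
    ∃ j < ω.length, cs.wordProd ω * cs.simple i = cs.wordProd (ω.eraseIdx j) := by
  have hmem : cs.simple i ∈ cs.rightInvSeq ω := by
    rw [← List.mem_reverse, ← leftInvSeq_reverse]
    apply mem_leftInvSeq_of_isLeftDescent
    rwa [wordProd_reverse, isLeftDescent_inv_iff]
  obtain ⟨j, hj, hji⟩ := List.mem_iff_getElem.1 hmem
  refine ⟨j, by simpa using hj, ?_⟩
  rw [← wordProd_mul_getD_rightInvSeq, List.getD_eq_getElem _ _ hj, hji]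

theorem isRightDescent_or_exists_mul_of_isRightDescent_mul {x y : W} {i : B}
    (hxy : cs.length (x * y) = cs.length x + cs.length y) (h : cs.IsRightDescent (x * y) i) :
    cs.IsRightDescent y i ∨ ∃ x', cs.length x' < cs.length x ∧ x * y * cs.simple i = x' * y := by
  obtain ⟨α, hα, rfl⟩ := cs.exists_isReduced x
  obtain ⟨β, hβ, rfl⟩ := cs.exists_isReduced y
  rw [← wordProd_append] at h
  obtain ⟨j, hj, hdel⟩ := exists_mul_simple_eq_wordProd_eraseIdx cs h
  rw [wordProd_append] at hdel
  rcases lt_or_ge j α.length with hjα | hjα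
  · refine .inr ⟨cs.wordProd (α.eraseIdx j), ?_, ?_⟩
    · have hle := cs.length_wordProd_le (α.eraseIdx j)
      rw [List.length_eraseIdx_of_lt hjα] at hle
      rw [hα.eq]
      omega
    · rw [hdel, List.eraseIdx_append_of_lt_length hjα, wordProd_append]
  · left
    rw [List.eraseIdx_append_of_length_le hjα, wordProd_append, mul_assoc, mul_right_inj] at hdel
    rw [List.length_append] at hj
    have hle := cs.length_wordProd_le (β.eraseIdx (j - α.length))
    rw [List.length_eraseIdx_of_lt (by omega), ← hdel] at hle
    rw [IsRightDescent, hβ.eq]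
    omega

end Exchange

section Parabolic

variable {B W : Type*} [Group W] {M : CoxeterMatrix B} (cs : CoxeterSystem M W) {J : Set B}

/-- The standard parabolic subgroup `W_J`, for an arbitrary set `J` of indices of simple
reflections; `parab` is the case of an orbit. -/
def standardParabolic (J : Set B) : Subgroup W := Subgroup.closure (cs.simple '' J)

theorem simple_mem_standardParabolic {i : B} (hi : i ∈ J) :
    cs.simple i ∈ standardParabolic cs J :=
  Subgroup.subset_closure ⟨i, hi, rfl⟩

theorem standardParabolic_mono {K : Set B} (h : J ⊆ K) :
    standardParabolic cs J ≤ standardParabolic cs K :=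
  Subgroup.closure_mono (Set.image_mono h)

theorem exists_wordProd_of_mem_standardParabolic {x : W} (hx : x ∈ standardParabolic cs J) :
    ∃ ω : List B, (∀ i ∈ ω, i ∈ J) ∧ x = cs.wordProd ω := by
  induction hx using Subgroup.closure_induction with
  | mem x hx =>
    obtain ⟨i, hi, rfl⟩ := hx
    exact ⟨[i], by simpa using hi, by simp⟩
  | one => exact ⟨[], by simp, by simp⟩
  | mul x y _ _ ihx ihy =>
    obtain ⟨α, hα, rfl⟩ := ihx
    obtain ⟨β, hβ, rfl⟩ := ihy
    exact ⟨α ++ β, fun i hi => (List.mem_append.1 hi).elim (hα i) (hβ i),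
      (cs.wordProd_append α β).symm⟩
  | inv x _ ih =>
    obtain ⟨ω, hω, rfl⟩ := ih
    exact ⟨ω.reverse, by simpa using hω, (cs.wordProd_reverse ω).symm⟩

theorem exists_isRightDescent_of_mem_standardParabolic {x : W}
    (hx : x ∈ standardParabolic cs J) (hx1 : x ≠ 1) : ∃ i ∈ J, cs.IsRightDescent x i := by
  obtain ⟨ω, hω, rfl⟩ := exists_wordProd_of_mem_standardParabolic cs hx
  clear hx
  induction hn : ω.length using Nat.strong_induction_on generalizing ω with
  | _ n ih =>
    obtain rfl | ⟨ω, i, rfl⟩ := ω.eq_nil_or_concat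
    · simp at hx1
    by_cases hi : cs.IsRightDescent (cs.wordProd (ω.concat i)) i
    · exact ⟨i, hω i (by simp), hi⟩
    -- The last letter is then a descent of the rest of the word, so two letters can be deleted.
    rw [isRightDescent_iff_not_isRightDescent_mul, not_not, wordProd_concat,
      simple_mul_simple_cancel_right] at hi
    obtain ⟨j, hj, hdel⟩ := exists_mul_simple_eq_wordProd_eraseIdx cs hi
    rw [wordProd_concat, hdel] at hx1 ⊢
    refine ih _ ?_ _ (fun k hk => hω k ?_) hx1 rfl
    · rw [← hn, List.length_eraseIdx_of_lt hj, List.length_concat]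
      omega
    · simp [List.mem_of_mem_eraseIdx hk]

@[elab_as_elim]
theorem standardParabolic_induction {p : ∀ x, x ∈ standardParabolic cs J → Prop}
    (one : p 1 (one_mem _))
    (mul_simple : ∀ x hx, ∀ i (hi : i ∈ J), ¬ cs.IsRightDescent x i → p x hx →
      p (x * cs.simple i) (mul_mem hx (simple_mem_standardParabolic cs hi)))
    {x : W} (hx : x ∈ standardParabolic cs J) : p x hx := by
  induction hn : cs.length x using Nat.strong_induction_on generalizing x with
  | _ n ih =>
    obtain rfl | hx1 := eq_or_ne x 1
    · exact one
    obtain ⟨i, hi, hdesc⟩ := exists_isRightDescent_of_mem_standardParabolic cs hx hx1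
    have hmem := mul_mem hx (simple_mem_standardParabolic cs hi)
    have hstep := mul_simple _ hmem i hi (cs.isRightDescent_iff_not_isRightDescent_mul.1 hdesc)
      (ih _ (hn ▸ hdesc) hmem rfl)
    simpa using hstep

theorem length_mul_of_forall_le {v : W}
    (hv : ∀ y ∈ standardParabolic cs J, cs.length v ≤ cs.length (v * y)) {x : W}
    (hx : x ∈ standardParabolic cs J) : cs.length (v * x) = cs.length v + cs.length x := by
  induction hx using standardParabolic_induction with
  | one => simp
  | mul_simple x hx i hi hdesc ih =>
    have hasc : ¬ cs.IsRightDescent (v * x) i := fun hd => by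
      obtain hd' | ⟨v', hlt, heq⟩ := isRightDescent_or_exists_mul_of_isRightDescent_mul cs ih hd
      · exact hdesc hd'
      · have hv' : v' = v * (x * cs.simple i * x⁻¹) := by
          rw [← mul_inv_eq_of_eq_mul heq]
          group
        have hmem : x * cs.simple i * x⁻¹ ∈ standardParabolic cs J :=
          mul_mem (mul_mem hx (simple_mem_standardParabolic cs hi)) (inv_mem hx)
        exact (hv _ hmem).not_gt (hv' ▸ hlt)
    rw [← mul_assoc, cs.not_isRightDescent_iff.1 hasc, cs.not_isRightDescent_iff.1 hdesc, ih,
      add_assoc]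

theorem exists_mem_standardParabolic_forall_length_le (J : Set B) (w : W) :
    ∃ y ∈ standardParabolic cs J, ∀ z ∈ standardParabolic cs J,
      cs.length (w * y) ≤ cs.length (w * z) := by
  obtain ⟨y, hy, hmin⟩ := exists_minimalFor_of_wellFoundedLT (· ∈ standardParabolic cs J)
    (fun y => cs.length (w * y)) ⟨1, one_mem _⟩
  exact ⟨y, hy, fun z hz => (le_total _ _).elim id (hmin hz)⟩

theorem length_mul_of_forall_not_isRightDescent {w : W} (hw : ∀ i ∈ J, ¬ cs.IsRightDescent w i)
    {x : W} (hx : x ∈ standardParabolic cs J) :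
    cs.length (w * x) = cs.length w + cs.length x := by
  obtain ⟨y, hy, hmin⟩ := exists_mem_standardParabolic_forall_length_le cs J w
  have hadd {z : W} (hz : z ∈ standardParabolic cs J) :
      cs.length (w * y * z) = cs.length (w * y) + cs.length z :=
    length_mul_of_forall_le cs (fun u hu => mul_assoc w y u ▸ hmin _ (mul_mem hy hu)) hz
  have hy1 : y⁻¹ = 1 := by
    by_contra hne
    obtain ⟨i, hi, hdesc⟩ := exists_isRightDescent_of_mem_standardParabolic cs (inv_mem hy) hne
    have hlen := hadd (inv_mem hy)
    have hlen' := hadd (mul_mem (inv_mem hy) (simple_mem_standardParabolic cs hi))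
    rw [← mul_assoc, mul_inv_cancel_right] at hlen'
    rw [mul_inv_cancel_right] at hlen
    refine hw i hi ?_
    unfold IsRightDescent at hdesc ⊢
    omega
  simpa [inv_eq_one.1 hy1] using hadd hx

theorem length_mul_add_of_forall_isRightDescent {w : W} (hw : ∀ i ∈ J, cs.IsRightDescent w i)
    {y : W} (hy : y ∈ standardParabolic cs J) :
    cs.length (w * y) + cs.length y = cs.length w := by
  suffices h : ∀ y ∈ standardParabolic cs J, cs.length (w * y⁻¹) + cs.length y = cs.length w by
    simpa using h y⁻¹ (inv_mem hy)
  intro y hy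
  induction hy using standardParabolic_induction with
  | one => simp
  | mul_simple y _ i hi hdesc ih =>
    have hfac : w * y⁻¹ * y = w := inv_mul_cancel_right w y
    obtain hd | ⟨x, hlt, heq⟩ := isRightDescent_or_exists_mul_of_isRightDescent_mul cs
      (x := w * y⁻¹) (y := y) (by rw [hfac, ih]) (by rw [hfac]; exact hw i hi)
    · exact absurd hd hdesc
    · rw [hfac] at heq
      have hx : w * (y * cs.simple i)⁻¹ = x := by
        rw [mul_inv_rev, inv_simple, ← mul_assoc, heq, mul_inv_cancel_right]
      have hle := cs.length_mul_le (w * (y * cs.simple i)⁻¹) (y * cs.simple i)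
      rw [inv_mul_cancel_right] at hle
      have hlen := cs.not_isRightDescent_iff.1 hdesc
      rw [hx] at hle ⊢
      omega

theorem finite_standardParabolic {w : W} (hw : ∀ i ∈ J, cs.IsRightDescent w i) :
    (standardParabolic cs J : Set W).Finite := by
  obtain ⟨ω, -, hω⟩ := cs.exists_isReduced w
  suffices h : ∀ y ∈ standardParabolic cs J, ∃ σ ∈ ω.sublists, w * y = cs.wordProd σ by
    refine Set.Finite.of_finite_image ((ω.sublists.finite_toSet.image cs.wordProd).subset ?_)
      (mul_right_injective w).injOn
    rintro _ ⟨y, hy, rfl⟩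
    obtain ⟨σ, hσ, heq⟩ := h y hy
    exact ⟨σ, hσ, heq.symm⟩
  intro y hy
  induction hy using standardParabolic_induction with
  | one => exact ⟨ω, by simp, by simpa using hω⟩
  | mul_simple y hy i hi hdesc ih =>
    obtain ⟨σ, hσ, heq⟩ := ih
    have hd : cs.IsRightDescent (cs.wordProd σ) i := by
      have hlen := length_mul_add_of_forall_isRightDescent cs hw hy
      have hlen' := length_mul_add_of_forall_isRightDescent cs hw
        (mul_mem hy (simple_mem_standardParabolic cs hi))
      rw [cs.not_isRightDescent_iff.1 hdesc, ← mul_assoc] at hlen'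
      rw [← heq, IsRightDescent]
      omega
    obtain ⟨j, -, hdel⟩ := exists_mul_simple_eq_wordProd_eraseIdx cs hd
    refine ⟨σ.eraseIdx j, ?_, by rw [← mul_assoc, heq, hdel]⟩
    exact List.mem_sublists.2 ((List.eraseIdx_sublist σ j).trans (List.mem_sublists.1 hσ))

end Parabolic

section RankTwo

variable {ι H : Type*}

/-- The total length of the factors of `altProd s t r k`. -/
def altWeight (s : ι → H) (L : H → ℕ) (t r : ι) (k : ℕ) : ℕ :=
  ((alternatingWord t r k).map fun i => L (s i)).sum

theorem altWeight_succ (s : ι → H) (L : H → ℕ) (t r : ι) (k : ℕ) :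
    altWeight s L t r (k + 1) = altWeight s L r t k + L (s r) := by
  simp [altWeight, alternatingWord_succ]

variable [Group H]

/-- A length function `L` for a family `s` of involutions that behaves on the cosets of each
rank-two subgroup `⟨s t, s r⟩` as a Coxeter length does on the cosets of a standard parabolic
subgroup, except that the lengths of the generators need not be `1`. -/
structure IsRankTwoLength (s : ι → H) (L : H → ℕ) : Prop where
  eq_zero_iff : ∀ w, L w = 0 ↔ w = 1
  mul_self : ∀ t, s t * s t = 1
  ne_one : ∀ t, s t ≠ 1
  length_mul_of_le : ∀ w t r, L w ≤ L (w * s t) → L w ≤ L (w * s r) →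
    ∀ y ∈ Subgroup.closure {s t, s r}, L (w * y) = L w + L y
  length_mul_of_lt : ∀ w t r, L (w * s t) < L w → L (w * s r) < L w →
    ∀ y ∈ Subgroup.closure {s t, s r}, L (w * y) + L y = L w

theorem altProd_mem_closure_pair (s : ι → H) (t r : ι) (k : ℕ) :
    altProd s t r k ∈ Subgroup.closure {s t, s r} := by
  induction k generalizing t r with
  | zero => exact one_mem _
  | succ k ih =>
    rw [altProd_succ]
    exact mul_mem (Set.pair_comm (s t) (s r) ▸ ih r t) (Subgroup.subset_closure (by simp))

theorem altProd_mul_pow {s : ι → H} (hs : ∀ t, s t * s t = 1) (t r : ι) (k : ℕ) :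
    altProd s t r k * (s r * s t) ^ k = altProd s r t k := by
  induction k generalizing t r with
  | zero => simp
  | succ k ih =>
    have hcomm : s t * (s r * s t) ^ k = (s t * s r) ^ k * s t :=
      SemiconjBy.pow_right (mul_assoc _ _ _).symm k
    calc altProd s t r (k + 1) * (s r * s t) ^ (k + 1)
        = altProd s r t k * (s r * s r) * (s t * (s r * s t) ^ k) := by
          rw [altProd_succ, pow_succ']; simp only [mul_assoc]
      _ = altProd s r t k * (s t * s r) ^ k * s t := by
          rw [hs, hcomm, mul_one, mul_assoc]
      _ = altProd s r t (k + 1) := by rw [ih, altProd_succ]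

theorem orderOf_mul_comm_of_mul_self {s : ι → H} (hs : ∀ t, s t * s t = 1) (t r : ι) :
    orderOf (s t * s r) = orderOf (s r * s t) := by
  rw [← orderOf_inv, mul_inv_rev, inv_eq_of_mul_eq_one_left (hs t),
    inv_eq_of_mul_eq_one_left (hs r)]

namespace IsRankTwoLength

variable {s : ι → H} {L : H → ℕ} (h : IsRankTwoLength s L)
include h

theorem length_one : L 1 = 0 := (h.eq_zero_iff 1).2 rfl

theorem length_pos (t : ι) : 0 < L (s t) :=
  Nat.pos_of_ne_zero fun h0 => h.ne_one t ((h.eq_zero_iff _).1 h0)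

theorem length_mul_generator_of_le {w : H} {t : ι} (hw : L w ≤ L (w * s t)) :
    L (w * s t) = L w + L (s t) :=
  h.length_mul_of_le w t t hw hw _ (Subgroup.subset_closure (by simp))

theorem length_mul_generator_of_lt {w : H} {t : ι} (hw : L (w * s t) < L w) :
    L (w * s t) + L (s t) = L w :=
  h.length_mul_of_lt w t t hw hw _ (Subgroup.subset_closure (by simp))

theorem eq_one_of_mem_closure_pair {w : H} {t r : ι} (hw : w ∈ Subgroup.closure {s t, s r})
    (ht : L w ≤ L (w * s t)) (hr : L w ≤ L (w * s r)) : w = 1 := by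
  have hinv := h.length_mul_of_le w t r ht hr w⁻¹ (inv_mem hw)
  rw [mul_inv_cancel, h.length_one] at hinv
  exact (h.eq_zero_iff w).1 (by omega)

theorem altWeight_lt_succ (t r : ι) (k : ℕ) : altWeight s L t r k < altWeight s L t r (k + 1) := by
  simp [altWeight, alternatingWord_succ', h.length_pos]

theorem length_altProd {t r : ι} {k : ℕ}
    (hasc : ∀ j < k, L (altProd s t r j) ≤ L (altProd s t r j * s t) ∧
      L (altProd s r t j) ≤ L (altProd s r t j * s r)) :
    L (altProd s t r k) = altWeight s L t r k := by
  induction k generalizing t r with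
  | zero => exact h.length_one
  | succ k ih =>
    rw [altProd_succ, altWeight_succ, h.length_mul_generator_of_le (hasc k k.lt_succ_self).2,
      ih fun j hj => (hasc j (hj.trans k.lt_succ_self)).symm]

theorem altProd_comm_of_descent {t r : ι} {k : ℕ}
    (hasc : ∀ j < k, L (altProd s t r j) ≤ L (altProd s t r j * s t) ∧
      L (altProd s r t j) ≤ L (altProd s r t j * s r))
    (hdesc : L (altProd s t r k * s t) < L (altProd s t r k)) :
    altProd s t r k = altProd s r t k := by
  obtain _ | k := k
  · rfl
  have hasc' : ∀ j < k, L (altProd s t r j) ≤ L (altProd s t r j * s t) ∧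
      L (altProd s r t j) ≤ L (altProd s r t j * s r) := fun j hj => hasc j (by omega)
  set w := altProd s t r (k + 1) with hw
  set y := altProd s r t (k + 1) with hy
  have hLw : L w = altWeight s L r t k + L (s r) := by
    rw [h.length_altProd hasc, altWeight_succ]
  have hLy : L y = altWeight s L t r k + L (s t) := by
    rw [h.length_altProd fun j hj => (hasc j hj).symm, altWeight_succ]
  have hwr : w * s r = altProd s r t k := by rw [hw, altProd_succ, mul_assoc, h.mul_self, mul_one]
  have hyt : y * s t = altProd s t r k := by rw [hy, altProd_succ, mul_assoc, h.mul_self, mul_one]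
  have hwmem : w ∈ Subgroup.closure {s t, s r} := altProd_mem_closure_pair s t r _
  have hymem : y ∈ Subgroup.closure {s t, s r} :=
    Set.pair_comm (s t) (s r) ▸ altProd_mem_closure_pair s r t _
  have hsub := h.length_mul_of_lt w t r hdesc (by
    rw [hwr, h.length_altProd fun j hj => (hasc' j hj).symm, hLw]
    exact Nat.lt_add_of_pos_right (h.length_pos r))
  have hww : w * w = 1 := (h.eq_zero_iff _).1 (by have := hsub w hwmem; omega)
  have hLwy := hsub y hymem
  -- `w` is longest in `⟨s t, s r⟩` and `y` has as many factors, so `w * y` is shorter than `s r`.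
  have hwy : w * y = 1 := by
    refine h.eq_one_of_mem_closure_pair (mul_mem hwmem hymem) ?_ ?_
    · have hLwyt := hsub _ (altProd_mem_closure_pair s t r k)
      rw [h.length_altProd hasc'] at hLwyt
      rw [mul_assoc, hyt]
      omega
    · by_contra! hlt
      have hge := h.length_mul_generator_of_lt hlt
      have hmono := h.altWeight_lt_succ r t k
      rw [altWeight_succ] at hmono
      omega
  exact mul_left_cancel (hww.trans hwy.symm)

theorem length_altProd_le_length_altProd_mul {t r : ι} {k : ℕ}
    (hk : orderOf (s t * s r) = 0 ∨ k < orderOf (s t * s r)) :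
    L (altProd s t r k) ≤ L (altProd s t r k * s t) := by
  induction k using Nat.strong_induction_on generalizing t r with
  | _ k ih =>
    have hord := orderOf_mul_comm_of_mul_self h.mul_self t r
    have hasc : ∀ j < k, L (altProd s t r j) ≤ L (altProd s t r j * s t) ∧
        L (altProd s r t j) ≤ L (altProd s r t j * s r) :=
      fun j hj => ⟨ih j hj (by omega), ih j hj (by omega)⟩
    by_contra! hdesc
    have hpow := altProd_mul_pow h.mul_self t r k
    rw [← h.altProd_comm_of_descent hasc hdesc, mul_eq_left] at hpow
    have hdvd := orderOf_dvd_of_pow_eq_one hpow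
    obtain rfl | hk0 := k.eq_zero_or_pos
    · simp [h.length_one] at hdesc
    · have hle := Nat.le_of_dvd hk0 hdvd
      have hpos := Nat.pos_of_dvd_of_pos hdvd hk0
      omega

end IsRankTwoLength

section Comparison

variable {C : Type*} [Group C] {M : CoxeterMatrix ι} (cs : CoxeterSystem M C)

theorem exists_eq_mul_alternatingWord {w : C} {t : ι} (r : ι) (ht : ¬ cs.IsRightDescent w t) :
    ∃ v k, w = v * cs.wordProd (alternatingWord t r k) ∧ cs.length w = cs.length v + k ∧
      ¬ cs.IsRightDescent v t ∧ ¬ cs.IsRightDescent v r := by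
  induction hn : cs.length w generalizing w t r with
  | zero =>
    refine ⟨w, 0, by simp [alternatingWord], by simp [hn], ht, ?_⟩
    simp [IsRightDescent, hn]
  | succ n ih =>
    by_cases hr : cs.IsRightDescent w r
    · have hlen := cs.isRightDescent_iff.1 hr
      obtain ⟨v, k, hw, hk, hvr, hvt⟩ :=
        ih t (cs.isRightDescent_iff_not_isRightDescent_mul.1 hr) (by omega)
      refine ⟨v, k + 1, ?_, by omega, hvt, hvr⟩
      rw [alternatingWord_succ, wordProd_concat, ← mul_assoc, ← hw,
        simple_mul_simple_cancel_right]
    · exact ⟨w, 0, by simp [alternatingWord], by simp [hn], ht, hr⟩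

theorem lt_of_not_isRightDescent_mul_alternatingWord {w v : C} {t r : ι} {k : ℕ}
    (hw : w = v * cs.wordProd (alternatingWord t r k)) (hlen : cs.length w = cs.length v + k)
    (ht : ¬ cs.IsRightDescent w t) : M t r = 0 ∨ k < M t r := by
  by_contra! ⟨hM, hk⟩
  have hred : ¬ cs.IsReduced (alternatingWord r t (k + 1)) :=
    cs.not_isReduced_alternatingWord r t (M.symmetric t r ▸ hM) (by rw [M.symmetric]; omega)
  have hle := cs.length_wordProd_le (alternatingWord r t (k + 1))
  rw [CoxeterSystem.IsReduced, length_alternatingWord] at hred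
  rw [length_alternatingWord] at hle
  have hmul := cs.length_mul_le v (cs.wordProd (alternatingWord r t (k + 1)))
  rw [alternatingWord_succ, wordProd_concat, ← mul_assoc, ← hw] at hmul
  rw [alternatingWord_succ, wordProd_concat] at hred hle
  have hasc := cs.not_isRightDescent_iff.1 ht
  omega

theorem map_wordProd_alternatingWord {N : Type*} [Monoid N] {φ : C →* N} {s : ι → N}
    (hφ : ∀ t, φ (cs.simple t) = s t) (t r : ι) (k : ℕ) :
    φ (cs.wordProd (alternatingWord t r k)) = altProd s t r k := by
  rw [wordProd, map_list_prod, List.map_map, altProd]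
  exact congrArg _ (List.map_congr_left fun i _ => hφ i)

namespace IsRankTwoLength

variable {s : ι → H} {L : H → ℕ} (h : IsRankTwoLength s L) {cs} {φ : C →* H}
  (hφ : ∀ t, φ (cs.simple t) = s t) (hM : ∀ t r, M t r = orderOf (s t * s r))
include h hφ hM

theorem length_map_le_of_not_isRightDescent {w : C} {t : ι} (ht : ¬ cs.IsRightDescent w t) :
    L (φ w) ≤ L (φ w * s t) := by
  induction hn : cs.length w using Nat.strong_induction_on generalizing w t with
  | _ n ih =>
    obtain rfl | hw1 := eq_or_ne w 1
    · simp [h.length_one]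
    obtain ⟨r, hr⟩ := cs.exists_rightDescent_of_ne_one hw1
    obtain ⟨v, k, hw, hlen, hvt, hvr⟩ := exists_eq_mul_alternatingWord cs r ht
    have hk : k ≠ 0 := by
      rintro rfl
      rw [alternatingWord, wordProd_nil, mul_one] at hw
      exact hvr (hw ▸ hr)
    have hadd {y : H} := h.length_mul_of_le (φ v) t r (ih _ (by omega) hvt rfl)
      (ih _ (by omega) hvr rfl) y
    have hmem := altProd_mem_closure_pair s t r k
    have halt : L (altProd s t r k) ≤ L (altProd s t r k * s t) :=
      h.length_altProd_le_length_altProd_mul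
        (hM t r ▸ lt_of_not_isRightDescent_mul_alternatingWord cs hw hlen ht)
    rw [hw, map_mul, map_wordProd_alternatingWord cs hφ, mul_assoc, hadd hmem,
      hadd (mul_mem hmem (Subgroup.subset_closure (by simp)))]
    exact Nat.add_le_add_left halt _

theorem injective_of_map_simple : Function.Injective φ := by
  rw [injective_iff_map_eq_one]
  intro w hw
  by_contra hw1
  obtain ⟨r, hr⟩ := cs.exists_rightDescent_of_ne_one hw1
  have hle := h.length_map_le_of_not_isRightDescent hφ hM
    (cs.isRightDescent_iff_not_isRightDescent_mul.1 hr)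
  rw [map_mul, hw, hφ, one_mul, h.mul_self, h.length_one] at hle
  exact hle.not_gt (h.length_pos r)

end IsRankTwoLength

end Comparison

/-- The Coxeter matrix of an injective family of involutions, given by the orders of their pairwise
products (order `0`, meaning no relation, for a product of infinite order). -/
def orderMatrix (s : ι → H) (hs : ∀ t, s t * s t = 1) (hinj : Function.Injective s) :
    CoxeterMatrix ι where
  M := Matrix.of fun t r => orderOf (s t * s r)
  isSymm := by
    ext t r
    exact orderOf_mul_comm_of_mul_self hs r t
  diagonal t := by simp [hs]
  off_diagonal t r htr := by
    rw [Matrix.of_apply, Ne, orderOf_eq_one_iff]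
    exact fun h1 => htr (hinj (mul_right_cancel (h1.trans (hs r).symm)))

theorem isLiftable_orderMatrix (s : ι → H) (hs : ∀ t, s t * s t = 1)
    (hinj : Function.Injective s) : (orderMatrix s hs hinj).IsLiftable s :=
  fun t r => pow_orderOf_eq_one (s t * s r)

theorem IsRankTwoLength.exists_coxeterSystem {s : ι → H} {L : H → ℕ} (h : IsRankTwoLength s L)
    (hinj : Function.Injective s) (hgen : Subgroup.closure (Set.range s) = ⊤) :
    ∃ cs : CoxeterSystem (orderMatrix s h.mul_self hinj) H, cs.simple = s := by
  let C := (orderMatrix s h.mul_self hinj).toCoxeterSystem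
  let φ := C.lift ⟨s, isLiftable_orderMatrix s h.mul_self hinj⟩
  have hφ (t : ι) : φ (C.simple t) = s t := C.lift_apply_simple _ t
  have hφ_inj : Function.Injective φ := h.injective_of_map_simple hφ fun _ _ => rfl
  have hφ_surj : Function.Surjective φ := by
    rw [← MonoidHom.range_eq_top, eq_top_iff, ← hgen, Subgroup.closure_le]
    rintro _ ⟨t, rfl⟩
    exact ⟨C.simple t, hφ t⟩
  exact ⟨C.map (MulEquiv.ofBijective φ ⟨hφ_inj, hφ_surj⟩), funext hφ⟩

end RankTwo

section Longest

variable {B W : Type*} [Group W] {M : CoxeterMatrix B} {cs : CoxeterSystem M W} {J : Set B}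

variable (cs J) in
/-- `x` is a longest element of `W_J`. Its existence forces `W_J` to be finite. -/
def IsLongest (x : W) : Prop :=
  x ∈ standardParabolic cs J ∧ ∀ u ∈ standardParabolic cs J, cs.length u ≤ cs.length x

theorem exists_isLongest {w : W} (hw : ∀ i ∈ J, cs.IsRightDescent w i) :
    ∃ x, IsLongest cs J x :=
  Set.exists_max_image _ cs.length (finite_standardParabolic cs hw) ⟨1, one_mem _⟩

namespace IsLongest

variable {x y : W}

theorem isRightDescent (hx : IsLongest cs J x) {i : B} (hi : i ∈ J) : cs.IsRightDescent x i :=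
  (hx.2 _ (mul_mem hx.1 (simple_mem_standardParabolic cs hi))).lt_of_ne
    (cs.length_mul_simple_ne x i)

theorem finite (hx : IsLongest cs J x) : (standardParabolic cs J : Set W).Finite :=
  finite_standardParabolic cs fun _ => hx.isRightDescent

theorem unique (hx : IsLongest cs J x) (hy : IsLongest cs J y) : x = y := by
  have hsub := length_mul_add_of_forall_isRightDescent cs (fun _ => hx.isRightDescent)
    (inv_mem hy.1)
  have hle := hy.2 x hx.1
  rw [length_inv] at hsub
  exact mul_inv_eq_one.1 (cs.length_eq_zero_iff.1 (by omega))

theorem inv (hx : IsLongest cs J x) : IsLongest cs J x⁻¹ :=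
  ⟨inv_mem hx.1, fun u hu => (hx.2 u hu).trans_eq (cs.length_inv x).symm⟩

theorem mul_self (hx : IsLongest cs J x) : x * x = 1 :=
  mul_eq_one_iff_eq_inv.2 (hx.unique hx.inv)

theorem ne_one (hx : IsLongest cs J x) (hJ : J.Nonempty) : x ≠ 1 := by
  rintro rfl
  obtain ⟨i, hi⟩ := hJ
  exact cs.not_isRightDescent_one i (hx.isRightDescent hi)

end IsLongest

end Longest

section PermutedReflections

variable {B W : Type*} [Group W] {M : CoxeterMatrix B} {cs : CoxeterSystem M W} {G : Type*}

variable (cs G) in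
/-- `G` acts compatibly on `W` and on the index set of `S`; in particular it stabilizes `S`. -/
def PermutesSimple [SMul G W] [SMul G B] : Prop :=
  ∀ (σ : G) (i : B), σ • cs.simple i = cs.simple (σ • i)

namespace PermutesSimple

variable [Group G] [MulDistribMulAction G W] [MulAction G B] (hG : PermutesSimple cs G)
include hG

theorem smul_wordProd (σ : G) (ω : List B) :
    σ • cs.wordProd ω = cs.wordProd (ω.map (σ • ·)) := by
  induction ω with
  | nil => simp
  | cons i ω ih => rw [wordProd_cons, smul_mul', ih, hG, List.map_cons, wordProd_cons]

theorem length_smul (σ : G) (w : W) : cs.length (σ • w) = cs.length w := by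
  have hle (σ : G) (w : W) : cs.length (σ • w) ≤ cs.length w := by
    obtain ⟨ω, hω, rfl⟩ := cs.exists_isReduced w
    rw [hG.smul_wordProd, hω.eq, ← ω.length_map (σ • ·)]
    exact cs.length_wordProd_le _
  exact (hle σ w).antisymm (by simpa using hle σ⁻¹ (σ • w))

theorem isRightDescent_smul_iff (σ : G) (w : W) (i : B) :
    cs.IsRightDescent (σ • w) (σ • i) ↔ cs.IsRightDescent w i := by
  rw [IsRightDescent, ← hG, ← smul_mul', hG.length_smul, hG.length_smul, IsRightDescent]

theorem smul_mem_standardParabolic {J : Set B} {σ : G} (hJ : ∀ i ∈ J, σ • i ∈ J) {x : W}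
    (hx : x ∈ standardParabolic cs J) : σ • x ∈ standardParabolic cs J := by
  obtain ⟨ω, hω, rfl⟩ := exists_wordProd_of_mem_standardParabolic cs hx
  rw [hG.smul_wordProd, wordProd, List.map_map]
  refine list_prod_mem fun y hy => ?_
  obtain ⟨i, hi, rfl⟩ := List.mem_map.1 hy
  exact simple_mem_standardParabolic cs (hJ i (hω i hi))

theorem smul_eq_of_isLongest {J : Set B} {σ : G} (hJ : ∀ i ∈ J, σ • i ∈ J) {x : W}
    (hx : IsLongest cs J x) : σ • x = x :=
  IsLongest.unique ⟨hG.smul_mem_standardParabolic hJ hx.1,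
    fun u hu => (hx.2 u hu).trans_eq (hG.length_smul σ x).symm⟩ hx

end PermutesSimple

end PermutedReflections

section FixedPoints

variable {B W G : Type} [Group W] {M : CoxeterMatrix B} {cs : CoxeterSystem M W}
  [Group G] [MulAction G B]

theorem mem_SGset_iff {x : W} :
    x ∈ SGset B W M cs G ↔ ∃ i, IsLongest cs (MulAction.orbit G i) x :=
  ⟨fun ⟨i, hx, _, hmax⟩ => ⟨i, hx, hmax⟩, fun ⟨i, hx⟩ => ⟨i, hx.1, hx.finite, hx.2⟩⟩

namespace PermutesSimple

variable [MulDistribMulAction G W] (hG : PermutesSimple cs G)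
include hG

theorem SGset_subset_fixedSubgroup : SGset B W M cs G ⊆ fixedSubgroup W G := by
  intro x hx σ
  obtain ⟨i, hi⟩ := mem_SGset_iff.1 hx
  exact hG.smul_eq_of_isLongest (fun _ => MulAction.mem_orbit_of_mem_orbit σ) hi

theorem isRightDescent_iff_of_mem_orbit {w : W} (hw : w ∈ fixedSubgroup W G) {i j : B}
    (hj : j ∈ MulAction.orbit G i) : cs.IsRightDescent w j ↔ cs.IsRightDescent w i := by
  obtain ⟨σ, rfl⟩ := hj
  simpa only [hw σ] using hG.isRightDescent_smul_iff σ w i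

theorem length_mul_lt_iff {w x : W} (hw : w ∈ fixedSubgroup W G) {i : B}
    (hx : IsLongest cs (MulAction.orbit G i) x) :
    cs.length (w * x) < cs.length w ↔ ∀ j ∈ MulAction.orbit G i, cs.IsRightDescent w j := by
  have hpos : cs.length x ≠ 0 := fun h0 =>
    hx.ne_one (MulAction.nonempty_orbit i) (cs.length_eq_zero_iff.1 h0)
  refine ⟨fun hlt j hj => ?_, fun hdesc => ?_⟩
  · by_contra hasc
    have hadd := length_mul_of_forall_not_isRightDescent cs (w := w) (J := MulAction.orbit G i)
      (fun k hk => by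
        rwa [hG.isRightDescent_iff_of_mem_orbit hw hk,
          ← hG.isRightDescent_iff_of_mem_orbit hw hj]) hx.1
    omega
  · have hsub := length_mul_add_of_forall_isRightDescent cs hdesc hx.1
    omega

theorem length_le_length_mul_iff {w x : W} (hw : w ∈ fixedSubgroup W G) {i : B}
    (hx : IsLongest cs (MulAction.orbit G i) x) :
    cs.length w ≤ cs.length (w * x) ↔ ∀ j ∈ MulAction.orbit G i, ¬ cs.IsRightDescent w j := by
  rw [← not_lt, hG.length_mul_lt_iff hw hx]
  refine ⟨fun h j hj hd => h fun k hk => ?_, fun h h' =>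
    h i (MulAction.mem_orbit_self i) (h' i (MulAction.mem_orbit_self i))⟩
  rwa [hG.isRightDescent_iff_of_mem_orbit hw hk, ← hG.isRightDescent_iff_of_mem_orbit hw hj]

theorem closure_SGset : Subgroup.closure (SGset B W M cs G) = fixedSubgroup W G := by
  refine le_antisymm ((Subgroup.closure_le _).2 hG.SGset_subset_fixedSubgroup) fun w hw => ?_
  induction hn : cs.length w using Nat.strong_induction_on generalizing w with
  | _ n ih =>
    obtain rfl | hw1 := eq_or_ne w 1
    · exact one_mem _
    obtain ⟨i, hi⟩ := cs.exists_rightDescent_of_ne_one hw1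
    have hdesc : ∀ j ∈ MulAction.orbit G i, cs.IsRightDescent w j :=
      fun j hj => (hG.isRightDescent_iff_of_mem_orbit hw hj).2 hi
    obtain ⟨x, hx⟩ := exists_isLongest hdesc
    have hxS : x ∈ SGset B W M cs G := mem_SGset_iff.2 ⟨i, hx⟩
    have hwx := ih _ (hn ▸ (hG.length_mul_lt_iff hw hx).2 hdesc) (w * x)
      (mul_mem hw (hG.SGset_subset_fixedSubgroup hxS)) rfl
    exact (Subgroup.mul_mem_cancel_right _ (Subgroup.subset_closure hxS)).1 hwx

/-- The elements of `S_G`, as a family of elements of `W^G` indexed by `S_G` itself. -/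
def generator (x : SGset B W M cs G) : fixedSubgroup W G :=
  ⟨x, hG.SGset_subset_fixedSubgroup x.2⟩

theorem range_coe_generator :
    Set.range (fun x => (hG.generator x : W)) = SGset B W M cs G :=
  Subtype.range_coe

theorem generator_injective : Function.Injective hG.generator :=
  fun _ _ hxy => Subtype.ext (congrArg (fixedSubgroup W G).subtype hxy)

theorem closure_range_generator : Subgroup.closure (Set.range hG.generator) = ⊤ := by
  apply Subgroup.map_injective (fixedSubgroup W G).subtype_injective
  rw [MonoidHom.map_closure, ← Set.range_comp, ← MonoidHom.range_eq_map, Subgroup.range_subtype]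
  exact (congrArg _ hG.range_coe_generator).trans hG.closure_SGset

theorem coe_mem_standardParabolic_union {x y : SGset B W M cs G} {i j : B}
    (hx : IsLongest cs (MulAction.orbit G i) x) (hy : IsLongest cs (MulAction.orbit G j) y)
    {u : fixedSubgroup W G} (hu : u ∈ Subgroup.closure {hG.generator x, hG.generator y}) :
    (u : W) ∈ standardParabolic cs (MulAction.orbit G i ∪ MulAction.orbit G j) := by
  suffices h : Subgroup.closure {hG.generator x, hG.generator y} ≤
      (standardParabolic cs (MulAction.orbit G i ∪ MulAction.orbit G j)).comap
        (fixedSubgroup W G).subtype from h hu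
  rw [Subgroup.closure_le]
  rintro _ (rfl | rfl)
  · exact standardParabolic_mono cs Set.subset_union_left hx.1
  · exact standardParabolic_mono cs Set.subset_union_right hy.1

theorem isRankTwoLength :
    IsRankTwoLength hG.generator fun w : fixedSubgroup W G => cs.length (w : W) where
  eq_zero_iff w := by simp
  mul_self x := by
    obtain ⟨i, hx⟩ := mem_SGset_iff.1 x.2
    exact Subtype.ext hx.mul_self
  ne_one x h1 := by
    obtain ⟨i, hx⟩ := mem_SGset_iff.1 x.2
    exact hx.ne_one (MulAction.nonempty_orbit i) (congrArg Subtype.val h1)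
  length_mul_of_le w x y hwx hwy u hu := by
    obtain ⟨i, hx⟩ := mem_SGset_iff.1 x.2
    obtain ⟨j, hy⟩ := mem_SGset_iff.1 y.2
    refine length_mul_of_forall_not_isRightDescent cs ?_
      (hG.coe_mem_standardParabolic_union hx hy hu)
    rintro k (hk | hk)
    · exact (hG.length_le_length_mul_iff w.2 hx).1 hwx k hk
    · exact (hG.length_le_length_mul_iff w.2 hy).1 hwy k hk
  length_mul_of_lt w x y hwx hwy u hu := by
    obtain ⟨i, hx⟩ := mem_SGset_iff.1 x.2
    obtain ⟨j, hy⟩ := mem_SGset_iff.1 y.2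
    refine length_mul_add_of_forall_isRightDescent cs ?_
      (hG.coe_mem_standardParabolic_union hx hy hu)
    rintro k (hk | hk)
    · exact (hG.length_mul_lt_iff w.2 hx).1 hwx k hk
    · exact (hG.length_mul_lt_iff w.2 hy).1 hwy k hk

end PermutesSimple

end FixedPoints

end CoxeterFixedPoints

/-!
STATEMENT 4 (Hée): Let `(W,S)` be a Coxeter system and `G` a group of automorphisms of `W`
stabilizing `S`.  With `S_G` the set of longest elements `s_ω` of the finite standard
parabolic subgroups `W_ω` attached to the `G`-orbits `ω ⊆ S`, the fixed subgroup `W^G`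
is generated by `S_G` and `(W^G, S_G)` is a Coxeter system.
-/

theorem statement4 (B W : Type) [Group W] (M : CoxeterMatrix B) (cs : CoxeterSystem M W)
    (G : Type) [Group G] [MulDistribMulAction G W] [MulAction G B]
    (hact : ∀ (σ : G) (i : B), σ • cs.simple i = cs.simple (σ • i)) :
    Subgroup.closure (SGset B W M cs G) = fixedSubgroup W G ∧
    ∃ (ι : Type) (M' : CoxeterMatrix ι) (cs' : CoxeterSystem M' (fixedSubgroup W G)),
      Set.range (fun i => (cs'.simple i : W)) = SGset B W M cs G := by
  have hG : CoxeterFixedPoints.PermutesSimple cs G := hact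
  refine ⟨hG.closure_SGset, ?_⟩
  obtain ⟨cs', hcs'⟩ := hG.isRankTwoLength.exists_coxeterSystem hG.generator_injective
    hG.closure_range_generator
  refine ⟨SGset B W M cs G, _, cs', ?_⟩
  rw [hcs']
  exact hG.range_coe_generator
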